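/- Let g be a Lie algebra over a field K of characteristic 0 with Lie bracket μ ∈ C^2(g) and differential D := [μ, −]; let Z^a := ker(D : C^a(g) → C^{a+1}(g)) and B^a := im(D : C^{a−1}(g) → C^a(g)) (with B^0 := 0), and H^a := Z^a / B^a. Then the Nijenhuis bracket descends to a well-defined bilinear operation H^a × H^b → H^{a+b−1} (i.e., if A, A' ∈ Z^a with A − A' ∈ B^a and B ∈ Z^b, then [A,B] − [A',B] ∈ B^{a+b−1}), and this induced bracket satisfies graded anticommutativity [α,β] = −(−1)^{(a−1)(b−1)}[β,α] and the graded Jacobi identity [α,[β,γ]] = [[α,β],γ] + (−1)^{(a−1)(b−1)}[β,[α,γ]]; thus ⊕_a H^a, with H^a in degree a−1, is a graded Lie (super)algebra. -/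

import Mathlib

/-!
Nijenhuis bracket on alternating multilinear cochains `C^n(V)` of an `R`-module `V`.

We encode an `n`-ary map `(Fin n → V) → V` as a map `(ℕ → V) → V` (depending only on the
first `n` coordinates) via `ext`, so that the insertion product and the Nijenhuis bracket,
whose output arities involve `ℕ`-subtraction, can be stated uniformly.
-/

/-- Extend an `n`-ary map on `V` to a map on sequences, reading the first `n` coordinates. -/
def ext {V : Type*} {n : ℕ} (f : (Fin n → V) → V) : (ℕ → V) → V :=
  fun x => f fun i => x i

/-- The insertion product `A∘B` of an `a`-ary map `f` and a `b`-ary map `g`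
(encoded as maps on sequences):
`(A∘B)(x_1,…,x_{a+b−1}) = Σ_σ sgn(σ) A(B(x_{σ(1)},…,x_{σ(b)}), x_{σ(b+1)},…,x_{σ(a+b−1)})`,
the sum running over all permutations `σ` of `{1,…,a+b−1}` increasing on the first `b` and
on the last `a-1` positions; it is `0` when `a = 0`. -/
noncomputable def ins {V : Type*} [AddCommGroup V] (a b : ℕ) (f g : (ℕ → V) → V) :
    (ℕ → V) → V := fun x =>
  if hA : a = 0 then 0
  else
    ∑ σ ∈ Finset.univ.filter (fun σ : Equiv.Perm (Fin (a + b - 1)) =>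
        (∀ i j : Fin (a + b - 1), i < j → (j : ℕ) < b → σ i < σ j) ∧
        (∀ i j : Fin (a + b - 1), i < j → b ≤ (i : ℕ) → σ i < σ j)),
      (Equiv.Perm.sign σ : ℤ) •
        f (fun i : ℕ =>
          if i = 0 then
            g (fun k : ℕ =>
              if hk : k < b then x ((σ ⟨k, by omega⟩ : Fin (a + b - 1)) : ℕ) else 0)
          else if hi : b + i - 1 < a + b - 1 then
            x ((σ ⟨b + i - 1, hi⟩ : Fin (a + b - 1)) : ℕ)
          else 0)

/-- The Nijenhuis bracket `[A,B] := A∘B − (−1)^{(a−1)(b−1)} B∘A`. -/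
noncomputable def nij {V : Type*} [AddCommGroup V] (a b : ℕ) (f g : (ℕ → V) → V) :
    (ℕ → V) → V := fun x =>
  ins a b f g x - (Int.negOnePow (((a : ℤ) - 1) * ((b : ℤ) - 1)) : ℤ) • ins b a g f x


section

variable {K : Type*} [Field K] [CharZero K] {L : Type*} [LieRing L] [LieAlgebra K L]

/-- `f` (the extension of an `n`-cochain of the Lie algebra `L`) is a cocycle:
`D f = [μ, f] = 0` where `μ` is (an alternating presentation of) the Lie bracket. -/
def IsCocycle (μ : AlternatingMap K L L (Fin 2)) (n : ℕ) (f : (ℕ → L) → L) : Prop :=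
  nij 2 n (ext ⇑μ) f = 0

/-- `f` (the extension of an `n`-cochain of the Lie algebra `L`) lies in
`B^n := im(D : C^{n-1} → C^n)`, with `B^0 := 0`. -/
def IsCoboundary (μ : AlternatingMap K L L (Fin 2)) (n : ℕ) (f : (ℕ → L) → L) : Prop :=
  (n = 0 ∧ f = 0) ∨
    ∃ (m : ℕ) (P : AlternatingMap K L L (Fin m)),
      n = m + 1 ∧ f = nij 2 m (ext ⇑μ) (ext ⇑P)

namespace NJ

set_option linter.unusedSectionVars false
set_option linter.unusedSimpArgs false

/-- prepend an element to a sequence -/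
def cns (x : L) (y : ℕ → L) : ℕ → L
  | 0 => x
  | n + 1 => y n

@[simp] theorem cns_zero (x : L) (y : ℕ → L) : cns x y 0 = x := rfl
@[simp] theorem cns_succ (x : L) (y : ℕ → L) (n : ℕ) : cns x y (n + 1) = y n := rfl

theorem cns_eta (z : ℕ → L) : cns (z 0) (fun i => z (i + 1)) = z := by
  funext i; cases i <;> rfl

/-- pull a sequence back along a permutation -/
def pull {N : ℕ} (σ : Equiv.Perm (Fin N)) (x : ℕ → L) : ℕ → L :=
  fun k => if h : k < N then x (σ ⟨k, h⟩ : Fin N) else 0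

def trm (b : ℕ) (f g : (ℕ → L) → L) (z : ℕ → L) : L :=
  f (cns (g (fun k => if k < b then z k else 0)) (fun i => z (b + i)))

def IsSh (b : ℕ) {N : ℕ} (σ : Equiv.Perm (Fin N)) : Prop :=
  (∀ i j : Fin N, i < j → (j : ℕ) < b → σ i < σ j) ∧
        (∀ i j : Fin N, i < j → b ≤ (i : ℕ) → σ i < σ j)

instance (b N : ℕ) : DecidablePred (IsSh b (N := N)) := fun σ => by
  unfold IsSh; infer_instance

theorem ins_zero (b : ℕ) (f g : (ℕ → L) → L) : ins 0 b f g = 0 := by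
  funext x; simp [ins]

theorem ins_eq (a b N : ℕ) (hN : N + 1 = a + b) (ha : a ≠ 0) (f g : (ℕ → L) → L) (x : ℕ → L) :
    ins a b f g x = ∑ σ : Equiv.Perm (Fin N) with IsSh b σ,
      (Equiv.Perm.sign σ : ℤ) • trm b f g (pull σ x) := by
  obtain rfl : N = a + b - 1 := by omega
  rw [ins, dif_neg ha]
  refine Finset.sum_congr (by ext σ; rw [Finset.mem_filter, Finset.mem_filter]; rfl) fun σ _ => ?_
  unfold trm
  congr 2
  funext i
  cases i with
  | zero =>
    simp only [if_true, cns_zero]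
    congr 1
    funext k
    by_cases hk : k < b
    · have : k < a + b - 1 := by omega
      simp [hk, pull, this]
    · simp [hk]
  | succ i =>
    have : b + (i + 1) - 1 = b + i := by omega
    simp [pull, this]

def E {n : ℕ} (p : Fin (n + 1)) (τ : Equiv.Perm (Fin n)) : Equiv.Perm (Fin (n + 1)) :=
  Equiv.Perm.decomposeFin.symm (0, τ) * p.cycleRange

theorem E_self {n : ℕ} (p : Fin (n + 1)) (τ : Equiv.Perm (Fin n)) : E p τ p = 0 := by
  simp [E]

theorem E_succAbove {n : ℕ} (p : Fin (n + 1)) (τ : Equiv.Perm (Fin n)) (k : Fin n) :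
    E p τ (p.succAbove k) = (τ k).succ := by
  simp [E, Fin.cycleRange_succAbove]

theorem E_sign {n : ℕ} (p : Fin (n + 1)) (τ : Equiv.Perm (Fin n)) :
    Equiv.Perm.sign (E p τ) = (-1) ^ (p : ℕ) * Equiv.Perm.sign τ := by
  simp [E, mul_comm]

theorem E_inj {n : ℕ} (p : Fin (n + 1)) : Function.Injective (E p) := by
  intro τ τ' h
  unfold E at h
  have := Equiv.Perm.decomposeFin.symm.injective (mul_right_cancel h)
  simpa using this

theorem E_surj {n : ℕ} (p : Fin (n + 1)) (σ : Equiv.Perm (Fin (n + 1))) (h : σ p = 0) :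
    ∃ τ, σ = E p τ := by
  obtain ⟨⟨q, τ⟩, hq⟩ := Equiv.Perm.decomposeFin.symm.surjective (σ * p.cycleRange⁻¹)
  have h0 := congrArg (fun s => s 0) hq
  have h1 : (p.cycleRange)⁻¹ 0 = p := by
    rw [Equiv.Perm.inv_eq_iff_eq]; simp
  simp [h1, h] at h0
  subst h0
  exact ⟨τ, by rw [E, hq]; simp⟩

theorem E_pull {n : ℕ} (p : Fin (n + 1)) (τ : Equiv.Perm (Fin n)) (x : L) (y : ℕ → L) :
    pull (E p τ) (cns x y) = fun k => if k < (p : ℕ) then pull τ y k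
      else if k = p then x else pull τ y (k - 1) := by
  funext k
  by_cases hk : k < n + 1
  · rcases Fin.eq_self_or_eq_succAbove p ⟨k, hk⟩ with h | ⟨j, h⟩
    · have : k = p := by rw [← h]
      simp only [pull, hk, dif_pos, h, E_self]
      simp [this]
    · simp only [pull, hk, dif_pos, h, E_succAbove]
      have h' := congrArg Fin.val h
      simp only [Fin.succAbove, Fin.lt_def] at h'
      have hj := j.2
      split_ifs at h' with h1
      · simp at h' h1
        subst h'
        simp [h1]
      · simp at h' h1
        subst h'
        have e1 : ¬ (j : ℕ) + 1 < p := by omega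
        have e2 : ¬ (j : ℕ) + 1 = p := by omega
        simp [e1, e2]
  · have hp := p.2
    have e1 : ¬ k < (p : ℕ) := by omega
    have e2 : ¬ k = p := by omega
    have e3 : ¬ k - 1 < n := by omega
    simp [pull, hk, e1, e2, e3]

theorem succAbove_val {n : ℕ} (p : Fin (n + 1)) (j : Fin n) :
    ((p.succAbove j : Fin (n + 1)) : ℕ) = if (j : ℕ) < p then (j : ℕ) else j + 1 := by
  simp only [Fin.succAbove, Fin.lt_def, Fin.val_castSucc]
  split_ifs <;> simp

theorem E_sh {n : ℕ} (p : Fin (n + 1)) (τ : Equiv.Perm (Fin n)) (b b' : ℕ)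
    (h : ((p : ℕ) = 0 ∧ b = b' + 1) ∨ ((p : ℕ) = b ∧ b' = b)) :
    IsSh b (E p τ) ↔ IsSh b' τ := by
  constructor
  · rintro ⟨h1, h2⟩
    refine ⟨fun i j hij hj => ?_, fun i j hij hi => ?_⟩
    · have := h1 (p.succAbove i) (p.succAbove j) (by simpa using hij) (by
        rw [succAbove_val]; split_ifs <;> omega)
      rw [E_succAbove, E_succAbove] at this
      simpa using this
    · have := h2 (p.succAbove i) (p.succAbove j) (by simpa using hij) (by
        rw [succAbove_val]; split_ifs <;> omega)
      rw [E_succAbove, E_succAbove] at this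
      simpa using this
  · rintro ⟨h1, h2⟩
    refine ⟨fun i j hij hj => ?_, fun i j hij hi => ?_⟩ <;>
    rcases Fin.eq_self_or_eq_succAbove p i with hip | ⟨i, rfl⟩ <;>
    rcases Fin.eq_self_or_eq_succAbove p j with hjp | ⟨j, rfl⟩
    · rw [hip, hjp] at hij; exact absurd hij (lt_irrefl _)
    · rw [hip, E_succAbove, E_self]; exact Fin.succ_pos _
    · rw [hjp] at hij; have := Fin.lt_def.1 hij; have := congrArg Fin.val hjp; omega
    · rw [E_succAbove, E_succAbove]
      refine Fin.succ_lt_succ_iff.2 (h1 i j (by simpa using hij) ?_)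
      rw [succAbove_val] at hj
      split_ifs at hj <;> omega
    · rw [hip, hjp] at hij; exact absurd hij (lt_irrefl _)
    · rw [hip, E_succAbove, E_self]; exact Fin.succ_pos _
    · rw [hjp] at hij; have := Fin.lt_def.1 hij; have := congrArg Fin.val hjp; omega
    · rw [E_succAbove, E_succAbove]
      refine Fin.succ_lt_succ_iff.2 (h2 i j (by simpa using hij) ?_)
      rw [succAbove_val] at hi
      split_ifs at hi <;> omega

theorem sum_part {n : ℕ} (p : Fin (n + 1)) (b b' : ℕ)
    (h : ((p : ℕ) = 0 ∧ b = b' + 1) ∨ ((p : ℕ) = b ∧ b' = b))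
    (F : Equiv.Perm (Fin (n + 1)) → L) :
    ∑ σ : Equiv.Perm (Fin (n + 1)) with (IsSh b σ ∧ σ p = 0), F σ
      = ∑ τ : Equiv.Perm (Fin n) with IsSh b' τ, F (E p τ) := by
  symm
  refine Finset.sum_bij (fun τ _ => E p τ) ?_ ?_ ?_ ?_
  · intro τ hτ
    simp only [Finset.mem_filter, Finset.mem_univ, true_and] at hτ ⊢
    exact ⟨(E_sh p τ b b' h).2 hτ, E_self p τ⟩
  · intro τ _ τ' _ e
    exact E_inj p e
  · intro σ hσ
    simp only [Finset.mem_filter, Finset.mem_univ, true_and] at hσ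
    obtain ⟨τ, rfl⟩ := E_surj p σ hσ.2
    exact ⟨τ, by simpa using (E_sh p τ b b' h).1 hσ.1, rfl⟩
  · intro τ _; rfl

theorem sh_zero {n : ℕ} (b : ℕ) (σ : Equiv.Perm (Fin (n + 1))) (h : IsSh b σ) :
    (σ 0 = 0 ∧ 0 < b) ∨ ∃ hb : b < n + 1, σ ⟨b, hb⟩ = 0 := by
  obtain ⟨j, hj⟩ := σ.surjective 0
  by_cases hjb : (j : ℕ) < b
  · left
    refine ⟨?_, by omega⟩
    rcases eq_or_ne j 0 with rfl | h0
    · exact hj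
    · have := h.1 0 j (Fin.pos_iff_ne_zero.2 h0) hjb
      rw [hj] at this
      exact absurd this (Fin.not_lt_zero _)
  · right
    have hb : b < n + 1 := by omega
    refine ⟨hb, ?_⟩
    rcases eq_or_ne (j : ℕ) b with h0 | h0
    · rw [← hj]; congr 1; exact Fin.ext h0.symm
    · have := h.2 ⟨b, hb⟩ j (Fin.lt_def.2 (by simp; omega)) (by simp)
      rw [hj] at this
      exact absurd this (Fin.not_lt_zero _)

theorem sum_sh {n : ℕ} (b : ℕ) (F : Equiv.Perm (Fin (n + 1)) → L) :
    ∑ σ : Equiv.Perm (Fin (n + 1)) with IsSh b σ, F σ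
      = (if 0 < b then ∑ τ : Equiv.Perm (Fin n) with IsSh (b - 1) τ, F (E 0 τ) else 0)
       + (if hb : b < n + 1 then ∑ τ : Equiv.Perm (Fin n) with IsSh b τ, F (E ⟨b, hb⟩ τ) else 0) := by
  by_cases h0 : 0 < b
  · rw [if_pos h0, ← sum_part 0 b (b - 1) (Or.inl ⟨rfl, by omega⟩)]
    by_cases hb : b < n + 1
    · rw [dif_pos hb, ← sum_part ⟨b, hb⟩ b b (Or.inr ⟨rfl, rfl⟩), ← Finset.sum_union]
      · refine Finset.sum_congr ?_ fun _ _ => rfl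
        ext σ
        simp only [Finset.mem_filter, Finset.mem_univ, true_and, Finset.mem_union]
        constructor
        · intro h
          rcases sh_zero b σ h with h1 | ⟨_, h1⟩
          · exact Or.inl ⟨h, h1.1⟩
          · exact Or.inr ⟨h, h1⟩
        · rintro (h | h) <;> exact h.1
      · rw [Finset.disjoint_left]
        intro σ h1 h2
        simp only [Finset.mem_filter, Finset.mem_univ, true_and] at h1 h2
        have := σ.injective (h1.2.trans h2.2.symm)
        have := congrArg Fin.val this
        simp at this
        omega
    · rw [dif_neg hb, add_zero]
      refine Finset.sum_congr ?_ fun _ _ => rfl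
      ext σ
      simp only [Finset.mem_filter, Finset.mem_univ, true_and]
      constructor
      · intro h
        rcases sh_zero b σ h with h1 | ⟨h2, h1⟩
        · exact ⟨h, h1.1⟩
        · exact absurd h2 hb
      · intro h; exact h.1
  · rw [if_neg h0, zero_add]
    have hb : b < n + 1 := by omega
    rw [dif_pos hb, ← sum_part ⟨b, hb⟩ b b (Or.inr ⟨rfl, rfl⟩)]
    refine Finset.sum_congr ?_ fun _ _ => rfl
    ext σ
    simp only [Finset.mem_filter, Finset.mem_univ, true_and]
    constructor
    · intro h
      rcases sh_zero b σ h with h1 | ⟨h2, h1⟩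
      · omega
      · exact ⟨h, h1⟩
    · intro h; exact h.1

theorem trm_E0 {n : ℕ} (b : ℕ) (h0 : 0 < b) (f g : (ℕ → L) → L) (τ : Equiv.Perm (Fin n))
    (x : L) (y : ℕ → L) :
    trm b f g (pull (E 0 τ) (cns x y)) = trm (b - 1) f (fun z => g (cns x z)) (pull τ y) := by
  obtain ⟨b, rfl⟩ : ∃ c, b = c + 1 := ⟨b - 1, by omega⟩
  rw [E_pull]
  unfold trm
  congr 2
  · congr 1
    funext k
    cases k <;> simp
  · funext i
    have : b + 1 + i - 1 = b + i := by omega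
    simp [this]

theorem trm_Eb {n : ℕ} (b : ℕ) (hb : b < n + 1) (f g : (ℕ → L) → L)
    (hf : ∀ x x' y, f (cns x (cns x' y)) = - f (cns x' (cns x y)))
    (τ : Equiv.Perm (Fin n))
    (x : L) (y : ℕ → L) :
    trm b f g (pull (E ⟨b, hb⟩ τ) (cns x y)) = - trm b (fun z => f (cns x z)) g (pull τ y) := by
  rw [E_pull]
  unfold trm
  rw [← hf]
  congr 2
  · congr 1
    funext k
    by_cases hk : k < b <;> simp [hk]
  · funext i
    cases i with
    | zero => simp
    | succ i =>
      have : b + (i + 1) - 1 = b + i := by omega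
      simp [this]

/-- the recursion for the insertion product -/
theorem ins_cns (a b : ℕ) (ha : 0 < a) (hab : 2 ≤ a + b) (f g : (ℕ → L) → L)
    (hf : 2 ≤ a → ∀ x x' y, f (cns x (cns x' y)) = - f (cns x' (cns x y)))
    (x : L) (y : ℕ → L) :
    ins a b f g (cns x y) = (if 0 < b then ins a (b - 1) f (fun z => g (cns x z)) y else 0)
      + (if 2 ≤ a then (-1 : ℤ) ^ (b + 1) • ins (a - 1) b (fun z => f (cns x z)) g y else 0) := by
  obtain ⟨n, hn⟩ : ∃ n, n + 2 = a + b := ⟨a + b - 2, by omega⟩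
  rw [ins_eq a b (n + 1) (by omega) (by omega), sum_sh]
  congr 1
  · split_ifs with h0
    · rw [ins_eq a (b - 1) n (by omega) (by omega)]
      refine Finset.sum_congr rfl fun τ _ => ?_
      rw [E_sign, trm_E0 b h0]
      simp
    · rfl
  · by_cases hb : 2 ≤ a
    · have hb' : b < n + 1 := by omega
      rw [if_pos hb, dif_pos hb', ins_eq (a - 1) b n (by omega) (by omega), Finset.smul_sum]
      refine Finset.sum_congr rfl fun τ _ => ?_
      rw [E_sign, trm_Eb b hb' f g (hf hb)]
      simp [pow_succ, smul_smul]
    · rw [if_neg hb, dif_neg (by omega)]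

theorem ins_right_zero (a : ℕ) (ha : 0 < a) (f g : (ℕ → L) → L) (x : ℕ → L) :
    ins a 0 f g x = f (cns (g 0) (fun i => if i + 1 < a then x i else 0)) := by
  obtain ⟨n, rfl⟩ : ∃ n, a = n + 1 := ⟨a - 1, by omega⟩
  have : ∀ n, (Finset.univ.filter (fun σ : Equiv.Perm (Fin n) => IsSh 0 σ)) = {1} := by
    intro n
    ext σ
    simp only [Finset.mem_filter, Finset.mem_univ, true_and, Finset.mem_singleton]
    constructor
    · intro h
      have hm : StrictMono σ := fun i j hij => h.2 i j hij (Nat.zero_le _)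
      exact Equiv.ext fun i => by
        have := congrFun (hm.range_inj (f := σ) (g := id) strictMono_id |>.1 (by simp)) i
        simpa using this
    · rintro rfl
      exact ⟨fun i j h _ => h, fun i j h _ => h⟩
  rw [ins_eq (n + 1) 0 n (by omega) (by omega), this]
  simp [trm, pull]
  rfl

theorem ins_one_one (f g : (ℕ → L) → L) (x : ℕ → L) :
    ins 1 1 f g x = f (cns (g (cns (x 0) 0)) 0) := by
  rw [ins_eq 1 1 1 (by omega) (by omega)]
  have : (Finset.univ.filter (fun σ : Equiv.Perm (Fin 1) => IsSh 1 σ)) = {1} := by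
    ext σ
    simp only [Finset.mem_filter, Finset.mem_univ, true_and, Finset.mem_singleton]
    exact ⟨fun _ => Subsingleton.elim _ _, by rintro rfl; exact ⟨fun i j h _ => h, fun i j h _ => h⟩⟩
  rw [this]
  simp [trm, pull]
  congr 2
  congr 1
  funext k
  cases k <;> simp


/-- `GoodN K m f`: `f` is (the sequence form of) an alternating multilinear map of arity `m - 1`
(`f = 0` when `m = 0`). -/
def GoodN (K : Type*) [Field K] {L : Type*} [LieRing L] [LieAlgebra K L] :
    ℕ → ((ℕ → L) → L) → Prop
  | 0, f => f = 0
  | 1, f => ∃ v, f = fun _ => v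
  | m + 2, f => (∀ x, GoodN K (m + 1) (fun y => f (cns x y))) ∧
      (∀ x x' y, f (cns (x + x') y) = f (cns x y) + f (cns x' y)) ∧
      (∀ (c : K) x y, f (cns (c • x) y) = c • f (cns x y)) ∧
      (1 ≤ m → ∀ x y, f (cns x (cns x y)) = 0)

/-- cochains of degree `p` (arity `p + 1`). -/
def Good (K : Type*) [Field K] {L : Type*} [LieRing L] [LieAlgebra K L] (p : ℤ)
    (f : (ℕ → L) → L) : Prop := GoodN K (p + 2).toNat f

/-- contraction in degree `p`. -/
noncomputable def io (p : ℤ) (x : L) (f : (ℕ → L) → L) : (ℕ → L) → L :=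
  if 0 ≤ p then fun y => f (cns x y) else 0

theorem goodN_add : ∀ (m : ℕ) (f f' : (ℕ → L) → L), GoodN K m f → GoodN K m f' →
    GoodN K m (f + f')
  | 0, f, f', h, h' => by simp only [GoodN] at *; simp [h, h']
  | 1, f, f', h, h' => by
    obtain ⟨v, rfl⟩ := h
    obtain ⟨v', rfl⟩ := h'
    exact ⟨v + v', rfl⟩
  | m + 2, f, f', h, h' => by
    refine ⟨fun x => goodN_add (m + 1) _ _ (h.1 x) (h'.1 x), ?_, ?_, ?_⟩
    · intro x x' y
      simp only [Pi.add_apply, h.2.1, h'.2.1]; abel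
    · intro c x y
      simp only [Pi.add_apply, h.2.2.1, h'.2.2.1, smul_add]
    · intro hm x y
      simp only [Pi.add_apply, h.2.2.2 hm, h'.2.2.2 hm, add_zero]

theorem goodN_neg : ∀ (m : ℕ) (f : (ℕ → L) → L), GoodN K m f → GoodN K m (-f)
  | 0, f, h => by simp only [GoodN] at *; simp [h]
  | 1, f, h => by
    obtain ⟨v, rfl⟩ := h
    exact ⟨-v, rfl⟩
  | m + 2, f, h => by
    refine ⟨fun x => goodN_neg (m + 1) _ (h.1 x), ?_, ?_, ?_⟩
    · intro x x' y
      simp only [Pi.neg_apply, h.2.1]; abel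
    · intro c x y
      simp only [Pi.neg_apply, h.2.2.1, smul_neg]
    · intro hm x y
      simp only [Pi.neg_apply, h.2.2.2 hm, neg_zero]

theorem goodN_zero : ∀ (m : ℕ), GoodN K m (0 : (ℕ → L) → L)
  | 0 => rfl
  | 1 => ⟨0, rfl⟩
  | m + 2 => ⟨fun _ => goodN_zero (m + 1), by simp, by simp, by simp⟩

/-- the sign `(-1)^p` -/
def ep (p : ℤ) : ℤ := (Int.negOnePow p : ℤ)

theorem ep_cases (p : ℤ) : ep p = 1 ∨ ep p = -1 := by
  rcases Int.units_eq_one_or (Int.negOnePow p) with h | h <;> simp [ep, h]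

theorem ep_add (p q : ℤ) : ep (p + q) = ep p * ep q := by
  simp [ep, Int.negOnePow_add]

theorem ep_neg (p : ℤ) : ep (-p) = ep p := by
  simp [ep, Int.negOnePow_neg]

theorem ep_sub (p q : ℤ) : ep (p - q) = ep p * ep q := by
  rw [sub_eq_add_neg, ep_add, ep_neg]

theorem ep_one : ep 1 = -1 := by simp [ep]

section
variable {p q : ℤ} {f f' g g' : (ℕ → L) → L}

theorem Good.add (h : Good K p f) (h' : Good K p f') : Good K p (f + f') := goodN_add _ _ _ h h'
theorem Good.neg (h : Good K p f) : Good K p (-f) := goodN_neg _ _ h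
theorem Good.sub (h : Good K p f) (h' : Good K p f') : Good K p (f - f') := by
  rw [sub_eq_add_neg]; exact h.add h'.neg
theorem Good.zero : Good K p (0 : (ℕ → L) → L) := goodN_zero _
theorem Good.ep (r : ℤ) (h : Good K p f) : Good K p (ep r • f) := by
  rcases ep_cases r with e | e <;> rw [e]
  · simpa using h
  · simpa using h.neg

theorem Good.eq_zero (h : Good K p f) (hp : p < -1) : f = 0 := by
  have : (p + 2).toNat = 0 := by omega
  unfold Good at h
  rw [this] at h
  exact h

theorem good_neg_one : Good K (-1) f ↔ ∃ v, f = fun _ => v := Iff.rfl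

theorem good_nonneg (hp : 0 ≤ p) : Good K p f ↔
    (∀ x, Good K (p - 1) (fun y => f (cns x y))) ∧
      (∀ x x' y, f (cns (x + x') y) = f (cns x y) + f (cns x' y)) ∧
      (∀ (c : K) x y, f (cns (c • x) y) = c • f (cns x y)) ∧
      (1 ≤ p → ∀ x y, f (cns x (cns x y)) = 0) := by
  obtain ⟨m, rfl⟩ := Int.eq_ofNat_of_zero_le hp
  have e1 : ((m : ℤ) + 2).toNat = m + 2 := by omega
  have e2 : ((m : ℤ) - 1 + 2).toNat = m + 1 := by omega
  have e3 : (1 : ℤ) ≤ m ↔ 1 ≤ m := by omega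
  simp only [Good, e1, e2, e3, GoodN]

theorem Good.io (h : Good K p f) (x : L) : Good K (p - 1) (io p x f) := by
  unfold NJ.io
  split_ifs with hp
  · exact ((good_nonneg hp).1 h).1 x
  · exact Good.zero

theorem Good.io_add (h : Good K p f) (x x' : L) : NJ.io p (x + x') f = NJ.io p x f + NJ.io p x' f := by
  unfold NJ.io
  split_ifs with hp
  · funext y; exact ((good_nonneg hp).1 h).2.1 x x' y
  · simp

theorem Good.io_smul (h : Good K p f) (c : K) (x : L) : NJ.io p (c • x) f = c • NJ.io p x f := by
  unfold NJ.io
  split_ifs with hp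
  · funext y; exact ((good_nonneg hp).1 h).2.2.1 c x y
  · simp

theorem Good.io_io (h : Good K p f) (x : L) : NJ.io (p - 1) x (NJ.io p x f) = 0 := by
  unfold NJ.io
  split_ifs with hp hp'
  · funext y; exact ((good_nonneg hp').1 h).2.2.2 (by omega) x y
  · rfl
  · rfl

theorem good_intro (hp : 0 ≤ p) (h1 : ∀ x, Good K (p - 1) (io p x f))
    (h2 : ∀ x x', io p (x + x') f = io p x f + io p x' f)
    (h3 : ∀ (c : K) x, io p (c • x) f = c • io p x f)
    (h4 : ∀ x, io (p - 1) x (io p x f) = 0) : Good K p f := by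
  rw [good_nonneg hp]
  simp only [io, hp, if_true] at h1 h2 h3 h4
  refine ⟨h1, fun x x' y => congrFun (h2 x x') y, fun c x y => congrFun (h3 c x) y, ?_⟩
  intro h x y
  have h5 := h4 x
  rw [if_pos (by omega)] at h5
  exact congrFun h5 y

theorem eq_zero_of_io (hp : 0 ≤ p) (h : ∀ x, io p x f = 0) : f = 0 := by
  funext z
  rw [← cns_eta z]
  have := congrFun (h (z 0)) (fun i => z (i + 1))
  simpa [io, hp] using this

theorem Good.swap (h : Good K p f) (hp : 1 ≤ p) (x x' : L) (y : ℕ → L) :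
    f (cns x (cns x' y)) = - f (cns x' (cns x y)) := by
  obtain ⟨h1, h2, h3, h4⟩ := (good_nonneg (by omega)).1 h
  have h4 := h4 hp
  have h5 := fun x => ((good_nonneg (by omega)).1 (h1 x)).2.1
  have := h4 (x + x') y
  rw [h2, h5, h5, h4, h4] at this
  rw [eq_neg_iff_add_eq_zero]
  simpa using this

theorem io_add' (x : L) : io p x (f + f') = io p x f + io p x f' := by
  unfold io; split_ifs
  · rfl
  · simp
theorem io_sub' (x : L) : io p x (f - f') = io p x f - io p x f' := by
  unfold io; split_ifs
  · rfl
  · simp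
theorem io_zsmul (x : L) (c : ℤ) : io p x (c • f) = c • io p x f := by
  unfold io; split_ifs
  · rfl
  · simp
theorem io_zero' (x : L) : io p x (0 : (ℕ → L) → L) = 0 := by
  unfold io; split_ifs <;> rfl

/-- insertion, indexed by degree -/
noncomputable def iz (p q : ℤ) (f g : (ℕ → L) → L) : (ℕ → L) → L :=
  ins (p + 1).toNat (q + 1).toNat f g

theorem iz_neg (hp : p < 0) : iz p q f g = 0 := by
  have : (p + 1).toNat = 0 := by omega
  rw [iz, this, ins_zero]

theorem iz_eq (hp : 0 ≤ p) (x : ℕ → L) : iz p q f g x =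
    ∑ σ : Equiv.Perm (Fin ((p + 1).toNat + (q + 1).toNat - 1)) with IsSh (q + 1).toNat σ,
      (Equiv.Perm.sign σ : ℤ) • trm (q + 1).toNat f g (pull σ x) :=
  ins_eq _ _ _ (by omega) (by omega) _ _ _

theorem iz_add_left : iz p q (f + f') g = iz p q f g + iz p q f' g := by
  by_cases hp : 0 ≤ p
  · funext x
    simp only [Pi.add_apply, iz_eq hp, ← Finset.sum_add_distrib, ← smul_add]
    rfl
  · simp [iz_neg (not_le.1 hp)]

theorem iz_smul_left (c : K) : iz p q (c • f) g = c • iz p q f g := by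
  by_cases hp : 0 ≤ p
  · funext x
    simp only [Pi.smul_apply, iz_eq hp, Finset.smul_sum]
    refine Finset.sum_congr rfl fun σ _ => ?_
    rw [smul_comm]
    rfl
  · simp [iz_neg (not_le.1 hp)]

theorem iz_add_right (h : Good K p f) : iz p q f (g + g') = iz p q f g + iz p q f g' := by
  by_cases hp : 0 ≤ p
  · funext x
    simp only [Pi.add_apply, iz_eq hp, ← Finset.sum_add_distrib, ← smul_add]
    refine Finset.sum_congr rfl fun σ _ => ?_
    congr 1
    exact ((good_nonneg hp).1 h).2.1 _ _ _
  · simp [iz_neg (not_le.1 hp)]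

theorem iz_smul_right (h : Good K p f) (c : K) : iz p q f (c • g) = c • iz p q f g := by
  by_cases hp : 0 ≤ p
  · funext x
    simp only [Pi.smul_apply, iz_eq hp, Finset.smul_sum]
    refine Finset.sum_congr rfl fun σ _ => ?_
    rw [smul_comm]
    congr 1
    exact ((good_nonneg hp).1 h).2.2.1 _ _ _
  · simp [iz_neg (not_le.1 hp)]

theorem iz_zero_left : iz p q (0 : (ℕ → L) → L) g = 0 := by
  have := iz_add_left (p := p) (q := q) (f := (0 : (ℕ → L) → L)) (f' := 0) (g := g)
  simpa using this

theorem iz_zero_right (h : Good K p f) : iz p q f 0 = 0 := by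
  have := iz_smul_right (q := q) (g := 0) h 0
  simpa using this

theorem io_iz (h : Good K p f) (h' : Good K q g) (x : L) :
    io (p + q) x (iz p q f g) = iz p (q - 1) f (io q x g) + ep q • iz (p - 1) q (io p x f) g := by
  by_cases hp : 0 ≤ p
  swap
  · rw [iz_neg (by omega), iz_neg (by omega), iz_neg (by omega), io_zero']; simp
  by_cases hq : q < -1
  · rw [h'.eq_zero hq, iz_zero_right h, io_zero', io_zero', iz_zero_right h,
      iz_zero_right (h.io x)]
    simp
  by_cases hpq : 0 ≤ p + q
  · funext y
    have e0 : io (p + q) x (iz p q f g) y = iz p q f g (cns x y) := by simp [io, hpq]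
    rw [e0, iz, ins_cns _ _ (by omega) (by omega) _ _ (fun ha => h.swap (by omega))]
    rw [Pi.add_apply]
    congr 1
    · split_ifs with hb
      · have : (q - 1 + 1).toNat = (q + 1).toNat - 1 := by omega
        have hq0 : 0 ≤ q := by omega
        simp only [iz, io, this, hq0, if_true]
      · have hq0 : ¬ 0 ≤ q := by omega
        simp [io, hq0, iz_zero_right h]
    · have hs : (-1 : ℤ) ^ ((q + 1).toNat + 1) = ep q := by
        obtain ⟨k, hk⟩ : ∃ k : ℕ, q = k - 1 := ⟨(q + 1).toNat, by omega⟩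
        subst hk
        have : ((k : ℤ) - 1 + 1).toNat = k := by omega
        rw [this, ep_sub, ep_one, pow_succ]
        simp [ep, Int.negOnePow_def]
      rw [hs]
      split_ifs with hb
      · have : (p - 1 + 1).toNat = (p + 1).toNat - 1 := by omega
        simp only [iz, io, this, hp, if_true, Pi.smul_apply]
      · rw [iz_neg (by omega)]; simp
  · have e1 : io (p + q) x (iz p q f g) = 0 := by simp [io, hpq]
    have e2 : io q x g = 0 := by
      have : ¬ 0 ≤ q := by omega
      simp [io, this]
    rw [e1, e2, iz_zero_right h, iz_neg (by omega)]
    simp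

theorem Good.iz_aux (n : ℕ) : ∀ (p q : ℤ) (f g : (ℕ → L) → L), (p + q + 1).toNat ≤ n →
    Good K p f → Good K q g → Good K (p + q) (NJ.iz p q f g) := by
  induction n with
  | zero =>
    intro p q f g hn h h'
    by_cases hp : p < 0
    · rw [iz_neg hp]; exact Good.zero
    by_cases hq : q < -1
    · rw [h'.eq_zero hq, iz_zero_right h]; exact Good.zero
    obtain rfl : p = 0 := by omega
    obtain rfl : q = -1 := by omega
    obtain ⟨v, rfl⟩ := good_neg_one.1 h'
    refine good_neg_one.2 ⟨f (cns v 0), ?_⟩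
    funext x
    rw [NJ.iz]
    simp [ins_right_zero]
    rfl
  | succ n ih =>
    intro p q f g hn h h'
    by_cases hpq : 0 ≤ p + q
    swap
    · exact ih p q f g (by omega) h h'
    have hA := fun x => ih p (q - 1) f _ (by omega) h (h'.io x)
    have hB := fun x => ih (p - 1) q _ g (by omega) (h.io x) h'
    refine good_intro hpq ?_ ?_ ?_ ?_
    · intro x
      rw [io_iz h h']
      refine Good.add ?_ (Good.ep _ ?_)
      · convert hA x using 1; ring
      · convert hB x using 1; ring
    · intro x x'
      simp only [io_iz h h', h.io_add, h'.io_add, iz_add_right h, iz_add_left, smul_add]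
      abel
    · intro c x
      simp only [io_iz h h', h.io_smul, h'.io_smul, iz_smul_right h, iz_smul_left, smul_add]
      rw [smul_comm c]
    · intro x
      rw [io_iz h h', io_add', io_zsmul]
      have e1 := io_iz h (h'.io x) x
      have e2 := io_iz (h.io x) h' x
      rw [show p + (q - 1) = p + q - 1 by ring] at e1
      rw [show p - 1 + q = p + q - 1 by ring] at e2
      rw [e1, e2, h.io_io, h'.io_io, iz_zero_left, iz_zero_right h, ep_sub, ep_one]
      rcases ep_cases q with e | e <;> rw [e] <;> simp

theorem Good.iz (h : Good K p f) (h' : Good K q g) : Good K (p + q) (NJ.iz p q f g) :=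
  Good.iz_aux _ p q f g le_rfl h h'

/-- The bracket, indexed by degree -/
noncomputable def br (p q : ℤ) (f g : (ℕ → L) → L) : (ℕ → L) → L :=
  iz p q f g - ep (p * q) • iz q p g f

theorem Good.br (h : Good K p f) (h' : Good K q g) : Good K (p + q) (NJ.br p q f g) := by
  refine (h.iz h').sub (Good.ep _ ?_)
  rw [add_comm]
  exact h'.iz h

theorem iz_neg_left : iz p q (-f) g = - iz p q f g := by
  rw [eq_neg_iff_add_eq_zero, ← iz_add_left]; simp [iz_zero_left]

theorem iz_neg_right (h : Good K p f) : iz p q f (-g) = - iz p q f g := by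
  rw [eq_neg_iff_add_eq_zero, ← iz_add_right h]; simp [iz_zero_right h]

theorem br_add_left (h' : Good K q g) : br p q (f + f') g = br p q f g + br p q f' g := by
  simp only [br, iz_add_left, iz_add_right h', smul_add]; abel
theorem br_add_right (h : Good K p f) : br p q f (g + g') = br p q f g + br p q f g' := by
  simp only [br, iz_add_left, iz_add_right h, smul_add]; abel
theorem br_ep_left (h' : Good K q g) (r : ℤ) : br p q (ep r • f) g = ep r • br p q f g := by
  rcases ep_cases r with e | e <;> rw [e]
  · simp
  · simp [br, iz_neg_left, iz_neg_right h', sub_eq_add_neg, add_comm]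
theorem br_ep_right (h : Good K p f) (r : ℤ) : br p q f (ep r • g) = ep r • br p q f g := by
  rcases ep_cases r with e | e <;> rw [e]
  · simp
  · simp [br, iz_neg_left, iz_neg_right h, sub_eq_add_neg, add_comm]
theorem br_zero_left (h' : Good K q g) : br p q 0 g = 0 := by
  simp [br, iz_zero_left, iz_zero_right h']
theorem br_zero_right (h : Good K p f) : br p q f 0 = 0 := by
  simp [br, iz_zero_left, iz_zero_right h]

theorem br_comm : br p q f g = - (ep (p * q) • br q p g f) := by
  unfold br
  rw [mul_comm q p]
  rcases ep_cases (p * q) with e | e <;> rw [e] <;> simp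

theorem io_br (h : Good K p f) (h' : Good K q g) (x : L) :
    io (p + q) x (br p q f g) = br p (q - 1) f (io q x g) + ep q • br (p - 1) q (io p x f) g := by
  have e := io_iz h' h x
  rw [add_comm] at e
  simp only [br, io_sub', io_zsmul, io_iz h h', e, mul_sub, sub_mul, ep_sub, mul_one, one_mul]
  rcases ep_cases (p * q) with e | e <;> rcases ep_cases p with e' | e' <;>
    rcases ep_cases q with e'' | e'' <;> rw [e, e', e''] <;> simp <;> abel

end

/-- the Jacobiator -/
noncomputable def jac (p q r : ℤ) (f g h : (ℕ → L) → L) : (ℕ → L) → L :=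
  br p (q + r) f (br q r g h) - br (p + q) r (br p q f g) h
    - ep (p * q) • br q (p + r) g (br p r f h)

theorem jac_good {p q r : ℤ} {f g h : (ℕ → L) → L} (hf : Good K p f) (hg : Good K q g)
    (hh : Good K r h) : Good K (p + q + r) (jac p q r f g h) := by
  refine Good.sub (Good.sub ?_ ?_) (Good.ep _ ?_)
  · rw [add_assoc]; exact hf.br (hg.br hh)
  · exact (hf.br hg).br hh
  · rw [show p + q + r = q + (p + r) by ring]; exact hg.br (hf.br hh)

theorem io_jac {p q r : ℤ} {f g h : (ℕ → L) → L} (hf : Good K p f) (hg : Good K q g)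
    (hh : Good K r h) (x : L) : io (p + q + r) x (jac p q r f g h) =
      jac p q (r - 1) f g (io r x h) + ep r • jac p (q - 1) r f (io q x g) h
       + ep (q + r) • jac (p - 1) q r (io p x f) g h := by
  have e1 := io_br hf (hg.br hh) x
  have e2 := io_br (hf.br hg) hh x
  have e3 := io_br hg (hf.br hh) x
  rw [← add_assoc, io_br hg hh, br_add_right hf, br_ep_right hf] at e1
  rw [io_br hf hg, br_add_left hh, br_ep_left hh] at e2
  rw [show q + (p + r) = p + q + r by ring, io_br hf hh, br_add_right hg, br_ep_right hg] at e3
  simp only [jac, io_sub', io_zsmul, e1, e2, e3]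
  have a1 : q + (r - 1) = q + r - 1 := by ring
  have a2 : q - 1 + r = q + r - 1 := by ring
  have a3 : p + (r - 1) = p + r - 1 := by ring
  have a4 : p - 1 + r = p + r - 1 := by ring
  have a5 : p + (q - 1) = p + q - 1 := by ring
  have a6 : p - 1 + q = p + q - 1 := by ring
  simp only [a1, a2, a3, a4, a5, a6, ep_add, mul_sub, sub_mul, ep_sub, mul_one, one_mul]
  rcases ep_cases (p * q) with e | e <;> rcases ep_cases p with e' | e' <;>
    rcases ep_cases q with e'' | e'' <;> rcases ep_cases r with e3 | e3 <;>
    rw [e, e', e'', e3] <;> simp <;> abel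

theorem iz_a (f g : (ℕ → L) → L) : iz 0 (-1) f g = fun _ => f (cns (g 0) 0) := by
  funext x
  rw [iz]
  simp [ins_right_zero]
  rfl

theorem iz_b (f g : (ℕ → L) → L) :
    iz 1 (-1) f g = fun z => f (cns (g 0) (cns (z 0) 0)) := by
  funext x
  rw [iz]
  simp [ins_right_zero]
  congr 2
  funext i
  cases i <;> simp

theorem iz_c (f g : (ℕ → L) → L) : iz 0 0 f g = fun z => f (cns (g (cns (z 0) 0)) 0) := by
  funext x
  rw [iz]
  simp [ins_one_one]

theorem Good.map_neg {p : ℤ} {f : (ℕ → L) → L} (h : Good K p f) (hp : 0 ≤ p) (x : L) (y : ℕ → L) :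
    f (cns (-x) y) = - f (cns x y) := by
  have := ((good_nonneg hp).1 h).2.2.1 (-1) x y
  simpa using this

theorem ep_zero : ep 0 = 1 := by simp [ep]
theorem ep_neg_one : ep (-1) = -1 := by simp [ep]

theorem br_m (q r : ℤ) (f g : (ℕ → L) → L) (hq : q < 0) (hr : r < 0) : br q r f g = 0 := by
  simp [br, iz_neg hq, iz_neg hr]

theorem jac_base {p q r : ℤ} {f g h : (ℕ → L) → L} (hf : Good K p f) (hg : Good K q g)
    (hh : Good K r h) (hn : p + q + r ≤ -1) : jac p q r f g h = 0 := by
  by_cases hp : p < -1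
  · rw [hf.eq_zero hp]
    simp [jac, br_zero_left hg, br_zero_left hh, br_zero_right hg, br_zero_left (hg.br hh)]
  by_cases hq : q < -1
  · rw [hg.eq_zero hq]
    simp [jac, br_zero_left hh, br_zero_right hf, br_zero_left (hf.br hh)]
  by_cases hr : r < -1
  · rw [hh.eq_zero hr]
    simp [jac, br_zero_right hg, br_zero_right hf, br_zero_right (hf.br hg)]
  by_cases hs : p + q + r < -1
  · exact (jac_good hf hg hh).eq_zero hs
  have hc : (p = 1 ∧ q = -1 ∧ r = -1) ∨ (p = -1 ∧ q = 1 ∧ r = -1) ∨ (p = -1 ∧ q = -1 ∧ r = 1) ∨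
     (p = 0 ∧ q = 0 ∧ r = -1) ∨ (p = 0 ∧ q = -1 ∧ r = 0) ∨ (p = -1 ∧ q = 0 ∧ r = 0) := by omega
  rcases hc with ⟨rfl, rfl, rfl⟩ | ⟨rfl, rfl, rfl⟩ | ⟨rfl, rfl, rfl⟩ | ⟨rfl, rfl, rfl⟩ |
    ⟨rfl, rfl, rfl⟩ | ⟨rfl, rfl, rfl⟩
  · rw [jac, br_m (-1) (-1) g h (by omega) (by omega), br_zero_right hf]
    funext z
    simp [br, iz_a, iz_b, iz_neg, ep_zero, ep_neg_one, ep_one]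
    rw [hf.swap le_rfl]; simp
  · rw [jac, br_m (-1) (-1) f h (by omega) (by omega), br_zero_right hg]
    funext z
    simp [br, iz_a, iz_b, iz_neg, ep_zero, ep_neg_one, ep_one]
    rw [hg.swap le_rfl]; simp
  · rw [jac, br_m (-1) (-1) f g (by omega) (by omega), br_zero_left hh]
    funext z
    simp [br, iz_a, iz_b, iz_neg, ep_zero, ep_neg_one, ep_one]
    rw [hh.swap le_rfl]; simp
  · funext z
    simp [jac, br, iz_a, iz_b, iz_c, iz_neg, ep_zero, ep_neg_one, ep_one]
  · funext z
    simp [jac, br, iz_a, iz_b, iz_c, iz_neg, ep_zero, ep_neg_one, ep_one, hf.map_neg]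
    abel
  · funext z
    simp [jac, br, iz_a, iz_b, iz_c, iz_neg, ep_zero, ep_neg_one, ep_one, hg.map_neg, hh.map_neg]
    abel

theorem jac_zero (n : ℕ) : ∀ {p q r : ℤ} {f g h : (ℕ → L) → L}, (p + q + r + 1).toNat ≤ n →
    Good K p f → Good K q g → Good K r h → jac p q r f g h = 0 := by
  induction n with
  | zero =>
    intro p q r f g h hn hf hg hh
    exact jac_base hf hg hh (by omega)
  | succ n ih =>
    intro p q r f g h hn hf hg hh
    by_cases hs : p + q + r ≤ -1
    · exact jac_base hf hg hh hs
    refine eq_zero_of_io (p := p + q + r) (by omega) fun x => ?_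
    rw [io_jac hf hg hh, ih (by omega) hf hg (hh.io x), ih (by omega) hf (hg.io x) hh,
      ih (by omega) (hf.io x) hg hh]
    simp

theorem goodN_ext : ∀ (n : ℕ) (A : AlternatingMap K L L (Fin n)), GoodN K (n + 1) (ext ⇑A)
  | 0, A => ⟨A 0, by funext x; exact congrArg A (Subsingleton.elim _ _)⟩
  | n + 1, A => by
    have key : ∀ x (y : ℕ → L), ext ⇑A (cns x y) = ext ⇑(A.curryLeft x) y := by
      intro x y
      simp only [ext, AlternatingMap.curryLeft_apply_apply]
      congr 1
      funext i
      refine Fin.cases ?_ (fun i => ?_) i <;> simp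
    refine ⟨fun x => ?_, ?_, ?_, ?_⟩
    · have := goodN_ext n (A.curryLeft x)
      convert this using 1
      funext y
      exact key x y
    · intro x x' y
      simp only [key, map_add]; rfl
    · intro c x y
      simp only [key, map_smul]; rfl
    · intro hn x y
      refine A.map_eq_zero_of_eq _ (i := ⟨0, by omega⟩) (j := ⟨1, by omega⟩) ?_ (by simp)
      rfl

/-- extend a finite tuple by zero -/
def pad {n : ℕ} (v : Fin n → L) : ℕ → L := fun k => if h : k < n then v ⟨k, h⟩ else 0

theorem ext_pad {n : ℕ} (F : (Fin n → L) → L) (v : Fin n → L) : ext F (pad v) = F v := by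
  simp [ext, pad]

theorem exists_ext : ∀ (n : ℕ) (f : (ℕ → L) → L), GoodN K (n + 1) f →
    ∃ A : AlternatingMap K L L (Fin n), f = ext ⇑A
  | 0, f, h => by
    obtain ⟨v, rfl⟩ := h
    exact ⟨AlternatingMap.constOfIsEmpty K L (Fin 0) v, rfl⟩
  | n + 1, f, ⟨h1, h2, h3, h4⟩ => by
    choose A hA using fun x => exists_ext n _ (h1 x)
    have hA' : ∀ x v, A x v = f (cns x (pad v)) := by
      intro x v
      rw [← ext_pad (A x) v, ← hA]
    let l : L →ₗ[K] MultilinearMap K (fun _ : Fin n => L) L :=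
      { toFun := fun x => (A x).toMultilinearMap
        map_add' := fun x x' => by
          ext v
          simp [hA', h2]
        map_smul' := fun c x => by
          ext v
          simp [hA', h3] }
    let M : MultilinearMap K (fun _ : Fin (n + 1) => L) L := LinearMap.uncurryLeft l
    have hM : ∀ v, M v = A (v 0) (fun i => v i.succ) := fun v => rfl
    have h0 : ∀ (v : Fin (n + 1) → L) (j : Fin (n + 1)), v 0 = v j → j ≠ 0 → M v = 0 := by
      intro v j hv hj
      obtain ⟨j, rfl⟩ := Fin.exists_succ_eq.2 hj
      obtain ⟨m, rfl⟩ : ∃ m, n = m + 1 := ⟨n - 1, by have := j.2; omega⟩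
      have base : ∀ w : Fin (m + 1) → L, w 0 = v 0 → A (v 0) w = 0 := by
        intro w hw
        rw [hA']
        have : pad w = cns (v 0) (fun i => pad w (i + 1)) := by
          rw [← hw, ← cns_eta (pad w)]
          rfl
        rw [this]
        exact h4 (by omega) _ _
      rw [hM]
      rcases eq_or_ne j 0 with rfl | hj0
      · exact base _ hv.symm
      · have := (A (v 0)).map_swap (fun i => v i.succ) hj0
        rw [base] at this
        · simpa using this.symm
        · simp [hv]
    refine ⟨{ M with map_eq_zero_of_eq' := ?_ }, ?_⟩
    · intro v i j hv hij
      change M v = 0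
      rcases eq_or_ne i 0 with rfl | hi
      · exact h0 v j hv hij.symm
      rcases eq_or_ne j 0 with rfl | hj
      · exact h0 v i hv.symm hi
      obtain ⟨i, rfl⟩ := Fin.exists_succ_eq.2 hi
      obtain ⟨j, rfl⟩ := Fin.exists_succ_eq.2 hj
      rw [hM]
      exact (A (v 0)).map_eq_zero_of_eq _ hv (fun e => hij (by rw [e]))
    · funext z
      have := congrFun (hA (z 0)) (fun i => z (i + 1))
      simp only [cns_eta] at this
      rw [this]
      rfl

theorem good_ext {n : ℕ} (A : AlternatingMap K L L (Fin n)) : Good K ((n : ℤ) - 1) (ext ⇑A) := by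
  have : ((n : ℤ) - 1 + 2).toNat = n + 1 := by omega
  rw [Good, this]
  exact goodN_ext n A

theorem Good.exists_ext {n : ℕ} {f : (ℕ → L) → L} {p : ℤ} (h : Good K p f) (hp : p = (n : ℤ) - 1) :
    ∃ A : AlternatingMap K L L (Fin n), f = ext ⇑A := by
  have : (p + 2).toNat = n + 1 := by omega
  rw [Good, this] at h
  exact NJ.exists_ext n f h

theorem nij_eq (a b : ℕ) (f g : (ℕ → L) → L) : nij a b f g = br ((a : ℤ) - 1) ((b : ℤ) - 1) f g := by
  have e1 : ((a : ℤ) - 1 + 1).toNat = a := by omega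
  have e2 : ((b : ℤ) - 1 + 1).toNat = b := by omega
  unfold br iz
  rw [e1, e2]
  rfl

theorem br_trunc_right {p : ℤ} {f g h : (ℕ → L) → L} (hf : Good K p f) (b c : ℕ) :
    br p (((b + c - 1 : ℕ) : ℤ) - 1) f (br ((b : ℤ) - 1) ((c : ℤ) - 1) g h) =
    br p ((b : ℤ) - 1 + ((c : ℤ) - 1)) f (br ((b : ℤ) - 1) ((c : ℤ) - 1) g h) := by
  by_cases hbc : b + c = 0
  · rw [br_m _ _ g h (by omega) (by omega), br_zero_right hf, br_zero_right hf]
  · congr 1; omega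

theorem br_trunc_left {p : ℤ} {f g h : (ℕ → L) → L} (hf : Good K p f) (b c : ℕ) :
    br (((b + c - 1 : ℕ) : ℤ) - 1) p (br ((b : ℤ) - 1) ((c : ℤ) - 1) g h) f =
    br ((b : ℤ) - 1 + ((c : ℤ) - 1)) p (br ((b : ℤ) - 1) ((c : ℤ) - 1) g h) f := by
  by_cases hbc : b + c = 0
  · rw [br_m _ _ g h (by omega) (by omega), br_zero_left hf, br_zero_left hf]
  · congr 1; omega

theorem cob_zero (μ : AlternatingMap K L L (Fin 2)) (n : ℕ) :
    IsCoboundary μ n (0 : (ℕ → L) → L) := by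
  cases n with
  | zero => exact Or.inl ⟨rfl, rfl⟩
  | succ m =>
    refine Or.inr ⟨m, 0, rfl, ?_⟩
    rw [nij_eq]
    exact (br_zero_right (good_ext μ)).symm

theorem jacobi (a b c : ℕ) (A : AlternatingMap K L L (Fin a)) (B : AlternatingMap K L L (Fin b))
        (C : AlternatingMap K L L (Fin c)) :
    nij a (b + c - 1) (ext ⇑A) (nij b c (ext ⇑B) (ext ⇑C))
          - nij (a + b - 1) c (nij a b (ext ⇑A) (ext ⇑B)) (ext ⇑C)
          - (Int.negOnePow (((a : ℤ) - 1) * ((b : ℤ) - 1)) : ℤ) •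
              nij b (a + c - 1) (ext ⇑B) (nij a c (ext ⇑A) (ext ⇑C)) = 0 := by
  have := jac_zero _ le_rfl (good_ext A) (good_ext B) (good_ext C)
  simp only [nij_eq]
  rw [br_trunc_right (good_ext A), br_trunc_right (good_ext B), br_trunc_left (good_ext C)]
  exact this

theorem main1 (μ : AlternatingMap K L L (Fin 2))
    (a b : ℕ) (A A' : AlternatingMap K L L (Fin a)) (B : AlternatingMap K L L (Fin b))
    (hB : IsCocycle μ b (ext ⇑B))
    (hc : IsCoboundary μ a (ext ⇑A - ext ⇑A')) :
      IsCoboundary μ (a + b - 1)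
        (nij a b (ext ⇑A) (ext ⇑B) - nij a b (ext ⇑A') (ext ⇑B)) := by
  have hsub : nij a b (ext ⇑A) (ext ⇑B) - nij a b (ext ⇑A') (ext ⇑B)
      = nij a b (ext ⇑A - ext ⇑A') (ext ⇑B) := by
    have h := br_add_left (p := (a : ℤ) - 1) (f := ext ⇑A - ext ⇑A') (f' := ext ⇑A') (good_ext B)
    rw [sub_add_cancel] at h
    simp only [nij_eq]
    rw [h, add_sub_cancel_right]
  rw [hsub]
  rcases hc with ⟨-, h0⟩ | ⟨m, P, rfl, hP⟩
  · rw [h0, nij_eq, br_zero_left (good_ext B)]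
    exact cob_zero μ _
  rw [hP]
  have hj := jacobi 2 m b μ P B
  unfold IsCocycle at hB
  rw [hB, nij_eq m _ _ 0, br_zero_right (good_ext P), smul_zero, sub_zero, sub_eq_zero] at hj
  have e : 2 + m - 1 = m + 1 := by omega
  rw [e] at hj
  rw [← hj]
  by_cases hmb : m + b = 0
  · obtain ⟨rfl, rfl⟩ : m = 0 ∧ b = 0 := by omega
    rw [nij_eq 0 0, br_m _ _ _ _ (by norm_num) (by norm_num), nij_eq, br_zero_right (good_ext μ)]
    exact cob_zero μ _
  · have hg := (good_ext P).br (good_ext B)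
    obtain ⟨Q, hQ⟩ := hg.exists_ext (n := m + b - 1) (by omega)
    refine Or.inr ⟨m + b - 1, Q, by omega, ?_⟩
    rw [nij_eq m b, hQ]

theorem main2 (μ : AlternatingMap K L L (Fin 2)) (a b : ℕ) (f g : (ℕ → L) → L) :
      IsCoboundary μ (a + b - 1)
        (nij a b f g + (Int.negOnePow (((a : ℤ) - 1) * ((b : ℤ) - 1)) : ℤ) • nij b a g f) := by
  have h : nij a b f g + (Int.negOnePow (((a : ℤ) - 1) * ((b : ℤ) - 1)) : ℤ) • nij b a g f = 0 := by
    rw [nij_eq, nij_eq, br_comm]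
    exact neg_add_cancel _
  rw [h]
  exact cob_zero μ _

end NJ

/-- the Nijenhuis bracket descends to a well-defined bilinear operation
`H^a × H^b → H^{a+b-1}` on the cohomology `H^• = Z^•/B^•` of a Lie algebra `g` over a
field `K` of characteristic 0 (if `A, A' ∈ Z^a` with `A − A' ∈ B^a` and `B ∈ Z^b`, then
`[A,B] − [A',B] ∈ B^{a+b−1}`), and the induced bracket satisfies graded anticommutativity
`[α,β] = −(−1)^{(a−1)(b−1)}[β,α]` and the graded Jacobi identity
`[α,[β,γ]] = [[α,β],γ] + (−1)^{(a−1)(b−1)}[β,[α,γ]]`; thus `⊕_a H^a`, with `H^a` in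
degree `a−1`, is a graded Lie superalgebra. -/
theorem nij_descends_to_cohomology
    (μ : AlternatingMap K L L (Fin 2)) (hμ : ∀ x y : L, μ ![x, y] = ⁅x, y⁆) :
    -- well-definedness on cohomology classes
    (∀ (a b : ℕ) (A A' : AlternatingMap K L L (Fin a)) (B : AlternatingMap K L L (Fin b)),
      IsCocycle μ a (ext ⇑A) → IsCocycle μ a (ext ⇑A') → IsCocycle μ b (ext ⇑B) →
      IsCoboundary μ a (ext ⇑A - ext ⇑A') →
      IsCoboundary μ (a + b - 1)
        (nij a b (ext ⇑A) (ext ⇑B) - nij a b (ext ⇑A') (ext ⇑B))) ∧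
    -- graded anticommutativity of the induced bracket
    (∀ (a b : ℕ) (A : AlternatingMap K L L (Fin a)) (B : AlternatingMap K L L (Fin b)),
      IsCocycle μ a (ext ⇑A) → IsCocycle μ b (ext ⇑B) →
      IsCoboundary μ (a + b - 1)
        (nij a b (ext ⇑A) (ext ⇑B)
          + (Int.negOnePow (((a : ℤ) - 1) * ((b : ℤ) - 1)) : ℤ) •
              nij b a (ext ⇑B) (ext ⇑A))) ∧
    -- graded Jacobi identity of the induced bracket
    (∀ (a b c : ℕ) (A : AlternatingMap K L L (Fin a)) (B : AlternatingMap K L L (Fin b))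
        (C : AlternatingMap K L L (Fin c)),
      IsCocycle μ a (ext ⇑A) → IsCocycle μ b (ext ⇑B) → IsCocycle μ c (ext ⇑C) →
      IsCoboundary μ (a + (b + c - 1) - 1)
        (nij a (b + c - 1) (ext ⇑A) (nij b c (ext ⇑B) (ext ⇑C))
          - nij (a + b - 1) c (nij a b (ext ⇑A) (ext ⇑B)) (ext ⇑C)
          - (Int.negOnePow (((a : ℤ) - 1) * ((b : ℤ) - 1)) : ℤ) •
              nij b (a + c - 1) (ext ⇑B) (nij a c (ext ⇑A) (ext ⇑C)))) := by
  exact ⟨fun a b A A' B _ _ hB hc => NJ.main1 μ a b A A' B hB hc,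
    fun a b A B _ _ => NJ.main2 μ a b _ _,
    fun a b c A B C _ _ _ => by rw [NJ.jacobi]; exact NJ.cob_zero μ _⟩

end
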